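/- (Lemma 2, outer contour) With the zero-drift mostly symmetric setup, running assumptions ε = n^{-α}, δ = n^{-β} (1/2 < α < 2β, α + β > 1, 1/3 < β < 1/2), and C^out = { t : |t| = (1+γ)/S(1) }: if γ > 0 is sufficiently small, then (2πi)^{-(d+1)} ∫_{N × C^out} [G(z,t)/H(z,t)] · dz dt / (z_1···z_d t)^{n+1} = O(τ^n) for some 0 < τ < S(1). -/

import Mathlib

open Finset Filter MeasureTheory
open scoped Classical Real

noncomputable section

/-- Total weight of walks of length `n` with steps in `S` (weighted by `w`),
starting at the origin and never leaving `ℕ^d`. -/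
def walkWeight (d : ℕ) (S : Finset (Fin d → ℤ)) (w : (Fin d → ℤ) → ℝ) (n : ℕ) : ℝ :=
  ∑ f : Fin n → {i // i ∈ S},
    if ∀ m : ℕ, m ≤ n → ∀ j : Fin d,
        0 ≤ ∑ k ∈ Finset.univ.filter (fun k : Fin n => (k : ℕ) < m), ((f k : Fin d → ℤ) j)
    then ∏ k : Fin n, w (f k) else 0

/-- The step set `S` (with weights `w`) is symmetric over the `k`-th coordinate axis. -/
def SymmetricAxis (d : ℕ) (S : Finset (Fin d → ℤ)) (w : (Fin d → ℤ) → ℝ) (k : Fin d) : Prop :=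
  ∀ i ∈ S, Function.update i k (-(i k)) ∈ S ∧ w (Function.update i k (-(i k))) = w i

namespace ZeroDrift

variable (d : ℕ) (S : Finset (Fin (d + 1) → ℤ)) (w : (Fin (d + 1) → ℤ) → ℝ)

/-- `S(1)`, the total weight of the step set. -/
def S1 : ℝ := ∑ i ∈ S, w i

/-- `A(ẑ)`: the Laurent polynomial collecting steps with last coordinate `-1`. -/
def AC (z : Fin (d + 1) → ℂ) : ℂ :=
  ∑ i ∈ S.filter fun i => i (Fin.last d) = -1,
    (w i : ℂ) * ∏ j : Fin d, z (Fin.castSucc j) ^ (i (Fin.castSucc j))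

/-- `B(ẑ)`: the Laurent polynomial collecting steps with last coordinate `1`. -/
def BC (z : Fin (d + 1) → ℂ) : ℂ :=
  ∑ i ∈ S.filter fun i => i (Fin.last d) = 1,
    (w i : ℂ) * ∏ j : Fin d, z (Fin.castSucc j) ^ (i (Fin.castSucc j))

/-- `Q(ẑ)`: the Laurent polynomial collecting steps with last coordinate `0`. -/
def QC (z : Fin (d + 1) → ℂ) : ℂ :=
  ∑ i ∈ S.filter fun i => i (Fin.last d) = 0,
    (w i : ℂ) * ∏ j : Fin d, z (Fin.castSucc j) ^ (i (Fin.castSucc j))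

/-- The characteristic Laurent polynomial `S(z)` evaluated at `z : ℂ^{d+1}`. -/
def SC (z : Fin (d + 1) → ℂ) : ℂ :=
  ∑ i ∈ S, (w i : ℂ) * ∏ j : Fin (d + 1), z j ^ (i j)

/-- `S̄(z) = S(z_1,…,z_{d},1/z_{d+1})` evaluated at `z : ℂ^{d+1}`. -/
def SbarC (z : Fin (d + 1) → ℂ) : ℂ :=
  ∑ i ∈ S, (w i : ℂ) *
    (∏ j : Fin d, z (Fin.castSucc j) ^ (i (Fin.castSucc j))) *
    z (Fin.last d) ^ (-(i (Fin.last d)))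

/-- The numerator `G(z,t)` of the diagonal representation. -/
def GC (z : Fin (d + 1) → ℂ) (t : ℂ) : ℂ :=
  (∏ j : Fin d, (1 + z (Fin.castSucc j))) *
    (1 - t * (∏ j, z j) * (QC d S w z + 2 * z (Fin.last d) * AC d S w z))

/-- The denominator `H(z,t) = H_1 H_2 H_3` of the diagonal representation. -/
def HC (z : Fin (d + 1) → ℂ) (t : ℂ) : ℂ :=
  (1 - z (Fin.last d)) * (1 - t * (∏ j, z j) * SbarC d S w z) *
    (1 - t * (∏ j, z j) * (QC d S w z + z (Fin.last d) * AC d S w z))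

/-- The point of `ℂ^{d+1}` with coordinates `i^{m_j}` encoded by `m : Fin (d+1) → Fin 4`. -/
def wOf (m : Fin (d + 1) → Fin 4) : Fin (d + 1) → ℂ :=
  fun j => Complex.I ^ (m j : ℕ)

/-- The (indices of the) finite set `Γ` of possible contributing points: `w_j ∈ {±1}` for
`j ≤ d`, `w_{d+1} ∈ {±1,±i}`, and `|1/(w_1⋯w_{d+1} S(w))| = 1/S(1)`. -/
def GammaIdx : Finset (Fin (d + 1) → Fin 4) :=
  Finset.univ.filter fun m =>
    (∀ j : Fin d, m (Fin.castSucc j) = 0 ∨ m (Fin.castSucc j) = 2) ∧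
    ‖1 / ((∏ j, wOf d m j) * SC d S w (wOf d m))‖ = 1 / S1 d S w

/-- The argument (angle) of the point encoded by `m` in coordinate `j`. -/
def argOf (m : Fin (d + 1) → Fin 4) (j : Fin (d + 1)) : ℝ := (m j : ℕ) * π / 2

/-- The box of angles parametrizing the product of arcs `N_w` for `w = wOf m`. -/
def box (m : Fin (d + 1) → Fin 4) (δ : ℝ) : Set (Fin (d + 1) → ℝ) :=
  Set.univ.pi fun j => Set.Ioo (argOf d m j - δ) (argOf d m j + δ)

/-- The parametrization of the torus `|z_j| = 1` (`j ≤ d`), `|z_{d+1}| = 1 - ε`. -/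
def zOf (ε : ℝ) (θ : Fin (d + 1) → ℝ) : Fin (d + 1) → ℂ :=
  fun j => (if j = Fin.last d then (1 - ε : ℂ) else 1) * Complex.exp (Complex.I * θ j)

/-- Angles parametrizing `N = ⋃_{w ∈ Γ} N_w`. -/
def Nparam (δ : ℝ) : Set (Fin (d + 1) → ℝ) := ⋃ m ∈ GammaIdx d S w, box d m δ

/-- The contour integral `(2πi)^{-(d+2)} ∫_{N × C} G/H · dz dt/(z_1⋯z_{d+1}t)^{n+1}`,
parametrized by angles, where `C` is the circle `|t| = r`. -/
def fullIntegral (n : ℕ) (ε δ r : ℝ) : ℂ :=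
  (((2 * π) ^ (d + 2) : ℝ))⁻¹ •
    ∫ θ in Nparam d S w δ,
      ∫ φ in Set.Ioo 0 (2 * π),
        GC d S w (zOf d ε θ) ((r : ℂ) * Complex.exp (Complex.I * φ)) /
            HC d S w (zOf d ε θ) ((r : ℂ) * Complex.exp (Complex.I * φ)) *
          (((∏ j, zOf d ε θ j) * ((r : ℂ) * Complex.exp (Complex.I * φ))) ^ n)⁻¹

/-- The residue integrand
`[(1+z_1)⋯(1+z_d)/(B(ẑ) z_1⋯z_{d+1})]·[(B(ẑ) - z_{d+1}^2 A(ẑ))/(1-z_{d+1})]·S̄(z)^n`,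
parametrized by angles, including the Jacobian factors `i z_j` of `dz_j`. -/
def resIntegrand (n : ℕ) (ε : ℝ) (θ : Fin (d + 1) → ℝ) : ℂ :=
  ((∏ j : Fin d, (1 + zOf d ε θ (Fin.castSucc j))) /
      (BC d S w (zOf d ε θ) * ∏ j, zOf d ε θ j)) *
    ((BC d S w (zOf d ε θ) - zOf d ε θ (Fin.last d) ^ 2 * AC d S w (zOf d ε θ)) /
      (1 - zOf d ε θ (Fin.last d))) *
    SbarC d S w (zOf d ε θ) ^ n *
    ∏ j, Complex.I * zOf d ε θ j

/-- The contour integral `∫_{N_w} (residue integrand) dz` over the product of arcs `N_w`,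
`w = wOf m`, parametrized by angles. -/
def resIntegral (n : ℕ) (ε δ : ℝ) (m : Fin (d + 1) → Fin 4) : ℂ :=
  ∫ θ in box d m δ, resIntegrand d S w n ε θ

end ZeroDrift

/-!
On `N × C^out` each of the three factors of `H` is bounded below. The first one is at least `ε`. The
third one stays away from `0` because `|t| (Q(1) + A(1)) < 1`. For the second one, `|S̄|` takes the
value `S(1)` on `Γ`, so by continuity `|t z_1⋯z_{d+1} S̄(z)|` stays above a constant `> 1` close to
`Γ`. Hence `G/H = O(1/ε)`, while `|z_1⋯z_{d+1} t|^{-n} = (r (1 - ε))^{-n}` on the circle of radius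
`r > 1/S(1)`; the rate `1/r < S(1)` absorbs the subexponential factor `1/ε`.
-/

open Asymptotics Topology

theorem eventually_forall_mem_ball {X Y : Type*} [TopologicalSpace X] [PseudoMetricSpace Y]
    {x : X} {y : Y} {P : X × Y → Prop} (h : ∀ᶠ q in 𝓝 (x, y), P q) :
    ∀ᶠ p : X × ℝ in 𝓝 x ×ˢ 𝓝 0, ∀ y' ∈ Metric.ball y p.2, P (p.1, y') := by
  rw [nhds_prod_eq, eventually_prod_iff] at h
  obtain ⟨PX, hPX, PY, hPY, hP⟩ := h
  filter_upwards [hPX.prod_mk (eventually_closedBall_subset hPY)] with p hp y' hy'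
  exact hP hp.1 (hp.2 (Metric.ball_subset_closedBall hy'))

theorem tendsto_natCast_rpow_neg_nhdsGT_zero {α : ℝ} (hα : 0 < α) :
    Tendsto (fun n : ℕ => (n : ℝ) ^ (-α)) atTop (𝓝[>] 0) := by
  refine tendsto_nhdsWithin_iff.2
    ⟨(tendsto_rpow_neg_atTop hα).comp tendsto_natCast_atTop_atTop, ?_⟩
  filter_upwards [eventually_gt_atTop 0] with n hn
  exact Real.rpow_pos_of_pos (Nat.cast_pos.2 hn) _

theorem isLittleO_inv_natCast_rpow_neg_const_pow (α : ℝ) {a : ℝ} (ha : 1 < a) :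
    (fun n : ℕ => ((n : ℝ) ^ (-α))⁻¹) =o[atTop] fun n => a ^ n := by
  have h := (isLittleO_rpow_exp_pos_mul_atTop α (Real.log_pos ha)).comp_tendsto
    (tendsto_natCast_atTop_atTop (R := ℝ))
  refine h.congr (fun n => ?_) fun n => ?_
  · simp [Real.rpow_neg]
  · simp [mul_comm (Real.log a), Real.exp_nat_mul, Real.exp_log (zero_lt_one.trans ha)]

namespace ZeroDrift

/-- The total weight of the steps with last coordinate `k`. For `k = -1, 0, 1` these are the values
`A(1)`, `Q(1)`, `B(1)`, kept real so that they can serve as bounds. -/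
def sliceWeight {d : ℕ} (S : Finset (Fin (d + 1) → ℤ)) (w : (Fin (d + 1) → ℤ) → ℝ) (k : ℤ) : ℝ :=
  ∑ i ∈ S.filter fun i => i (Fin.last d) = k, w i

/-- The integrand `G/H · (z_1⋯z_{d+1} t)^{-n}` of `fullIntegral`: one power of `z_1⋯z_{d+1} t` is
cancelled by the Jacobian of the parametrization by angles. -/
def diagIntegrand (d : ℕ) (S : Finset (Fin (d + 1) → ℤ)) (w : (Fin (d + 1) → ℤ) → ℝ) (n : ℕ)
    (z : Fin (d + 1) → ℂ) (t : ℂ) : ℂ :=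
  GC d S w z t / HC d S w z t * (((∏ j, z j) * t) ^ n)⁻¹

variable {d : ℕ} {S : Finset (Fin (d + 1) → ℤ)} {w : (Fin (d + 1) → ℤ) → ℝ}

theorem sliceWeight_nonneg (hw : ∀ i ∈ S, 0 ≤ w i) (k : ℤ) : 0 ≤ sliceWeight S w k :=
  Finset.sum_nonneg fun i hi => hw i (Finset.mem_of_mem_filter i hi)

theorem sliceWeight_pos (hw : ∀ i ∈ S, 0 < w i) {k : ℤ} (hk : ∃ i ∈ S, i (Fin.last d) = k) :
    0 < sliceWeight S w k :=
  Finset.sum_pos (fun i hi => hw i (Finset.mem_of_mem_filter i hi))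
    (hk.imp fun _ hi => Finset.mem_filter.2 hi)

theorem S1_eq_add_sliceWeight
    (hstep : ∀ i ∈ S, i (Fin.last d) = -1 ∨ i (Fin.last d) = 0 ∨ i (Fin.last d) = 1) :
    S1 d S w = sliceWeight S w 0 + sliceWeight S w (-1) + sliceWeight S w 1 := by
  simp only [S1, sliceWeight, Finset.sum_filter, ← Finset.sum_add_distrib]
  refine Finset.sum_congr rfl fun i hi => ?_
  rcases hstep i hi with h | h | h <;> simp [h]

section UnitTorus

variable {z : Fin (d + 1) → ℂ} {t : ℂ}

theorem norm_prod_eq_norm_last (hz : ∀ j : Fin d, ‖z (Fin.castSucc j)‖ = 1) :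
    ‖∏ j, z j‖ = ‖z (Fin.last d)‖ := by
  simp [Fin.prod_univ_castSucc, hz]

theorem norm_sum_slice_le (hw : ∀ i ∈ S, 0 ≤ w i) (hz : ∀ j : Fin d, ‖z (Fin.castSucc j)‖ = 1)
    (k : ℤ) :
    ‖∑ i ∈ S.filter fun i => i (Fin.last d) = k,
        (w i : ℂ) * ∏ j : Fin d, z (Fin.castSucc j) ^ (i (Fin.castSucc j))‖ ≤
      sliceWeight S w k := by
  refine norm_sum_le_of_le _ fun i hi => ?_
  simp [hz, abs_of_nonneg (hw i (Finset.mem_of_mem_filter i hi))]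

theorem norm_QC_add_mul_AC_le (hw : ∀ i ∈ S, 0 ≤ w i)
    (hz : ∀ j : Fin d, ‖z (Fin.castSucc j)‖ = 1) (a : ℂ) :
    ‖QC d S w z + a * AC d S w z‖ ≤ sliceWeight S w 0 + ‖a‖ * sliceWeight S w (-1) := by
  refine norm_add_le_of_le (norm_sum_slice_le hw hz 0) ?_
  rw [norm_mul]
  gcongr
  exact norm_sum_slice_le hw hz (-1)

theorem norm_GC_le (hw : ∀ i ∈ S, 0 ≤ w i) (hz : ∀ j : Fin d, ‖z (Fin.castSucc j)‖ = 1)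
    (hlast : ‖z (Fin.last d)‖ ≤ 1) :
    ‖GC d S w z t‖ ≤ 2 ^ d * (1 + ‖t‖ * (sliceWeight S w 0 + 2 * sliceWeight S w (-1))) := by
  have hA := sliceWeight_nonneg hw (-1)
  have hprod : ∏ j : Fin d, ‖1 + z (Fin.castSucc j)‖ ≤ 2 ^ d := by
    have htwo (j : Fin d) : ‖1 + z (Fin.castSucc j)‖ ≤ 2 := by
      simpa [hz, one_add_one_eq_two] using norm_add_le 1 (z (Fin.castSucc j))
    simpa using Finset.prod_le_prod (fun j _ => norm_nonneg _) fun j (_ : j ∈ Finset.univ) => htwo j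
  have hQA : ‖QC d S w z + 2 * z (Fin.last d) * AC d S w z‖ ≤
      sliceWeight S w 0 + 2 * sliceWeight S w (-1) := by
    refine (norm_QC_add_mul_AC_le hw hz _).trans ?_
    gcongr
    rw [norm_mul, Complex.norm_two]
    linarith
  rw [GC, norm_mul, norm_prod]
  gcongr
  refine norm_sub_le_of_le norm_one.le ?_
  rw [norm_mul, norm_mul, norm_prod_eq_norm_last hz]
  gcongr
  exact mul_le_of_le_one_right (norm_nonneg _) hlast

theorem one_sub_le_norm_one_sub_mul_QC_add_AC (hw : ∀ i ∈ S, 0 ≤ w i)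
    (hz : ∀ j : Fin d, ‖z (Fin.castSucc j)‖ = 1) (hlast : ‖z (Fin.last d)‖ ≤ 1) :
    1 - ‖t‖ * (sliceWeight S w 0 + sliceWeight S w (-1)) ≤
      ‖1 - t * (∏ j, z j) * (QC d S w z + z (Fin.last d) * AC d S w z)‖ := by
  have hA := sliceWeight_nonneg hw (-1)
  have hQA : ‖QC d S w z + z (Fin.last d) * AC d S w z‖ ≤
      sliceWeight S w 0 + sliceWeight S w (-1) := by
    refine (norm_QC_add_mul_AC_le hw hz _).trans ?_
    gcongr
    exact mul_le_of_le_one_left hA hlast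
  calc 1 - ‖t‖ * (sliceWeight S w 0 + sliceWeight S w (-1))
      ≤ ‖(1 : ℂ)‖ - ‖t * (∏ j, z j) * (QC d S w z + z (Fin.last d) * AC d S w z)‖ := by
        rw [norm_one, norm_mul, norm_mul, norm_prod_eq_norm_last hz]
        gcongr
        exact mul_le_of_le_one_right (norm_nonneg _) hlast
    _ ≤ _ := norm_sub_norm_le _ _

theorem sub_one_le_norm_one_sub_mul_SbarC (hz : ∀ j : Fin d, ‖z (Fin.castSucc j)‖ = 1) :
    ‖t‖ * (‖z (Fin.last d)‖ * ‖SbarC d S w z‖) - 1 ≤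
      ‖1 - t * (∏ j, z j) * SbarC d S w z‖ := by
  have h := norm_sub_norm_le (t * (∏ j, z j) * SbarC d S w z) 1
  rwa [norm_sub_rev, norm_one, norm_mul, norm_mul, norm_prod_eq_norm_last hz, mul_assoc] at h

theorem le_norm_HC (hw : ∀ i ∈ S, 0 ≤ w i) (hz : ∀ j : Fin d, ‖z (Fin.castSucc j)‖ = 1)
    (hlast : ‖z (Fin.last d)‖ ≤ 1) {c : ℝ} (hc : c ≤ ‖z (Fin.last d)‖ * ‖SbarC d S w z‖)
    (htc : 1 ≤ ‖t‖ * c) (ht : ‖t‖ * (sliceWeight S w 0 + sliceWeight S w (-1)) ≤ 1) :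
    (1 - ‖z (Fin.last d)‖) * (‖t‖ * c - 1) *
        (1 - ‖t‖ * (sliceWeight S w 0 + sliceWeight S w (-1))) ≤ ‖HC d S w z t‖ := by
  have hone : 1 - ‖z (Fin.last d)‖ ≤ ‖1 - z (Fin.last d)‖ := by
    simpa using norm_sub_norm_le 1 (z (Fin.last d))
  have hSbar : ‖t‖ * c - 1 ≤ ‖1 - t * (∏ j, z j) * SbarC d S w z‖ :=
    le_trans (by gcongr) (sub_one_le_norm_one_sub_mul_SbarC hz)
  have hQA := one_sub_le_norm_one_sub_mul_QC_add_AC (t := t) hw hz hlast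
  rw [HC, norm_mul, norm_mul]
  exact mul_le_mul (mul_le_mul hone hSbar (sub_nonneg.2 htc) (norm_nonneg _)) hQA (sub_nonneg.2 ht)
    (by positivity)

theorem norm_diagIntegrand_le (hw : ∀ i ∈ S, 0 ≤ w i)
    (hz : ∀ j : Fin d, ‖z (Fin.castSucc j)‖ = 1) (hlast : ‖z (Fin.last d)‖ < 1) {c : ℝ}
    (hc : c ≤ ‖z (Fin.last d)‖ * ‖SbarC d S w z‖) (htc : 1 < ‖t‖ * c)
    (ht : ‖t‖ * (sliceWeight S w 0 + sliceWeight S w (-1)) < 1) (n : ℕ) :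
    ‖diagIntegrand d S w n z t‖ ≤
      2 ^ d * (1 + ‖t‖ * (sliceWeight S w 0 + 2 * sliceWeight S w (-1))) /
          ((1 - ‖z (Fin.last d)‖) * (‖t‖ * c - 1) *
            (1 - ‖t‖ * (sliceWeight S w 0 + sliceWeight S w (-1)))) *
        (‖t‖ * ‖z (Fin.last d)‖)⁻¹ ^ n := by
  have : 0 < (1 - ‖z (Fin.last d)‖) * (‖t‖ * c - 1) *
      (1 - ‖t‖ * (sliceWeight S w 0 + sliceWeight S w (-1))) :=
    mul_pos (mul_pos (sub_pos.2 hlast) (sub_pos.2 htc)) (sub_pos.2 ht)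
  have hG := norm_GC_le (t := t) hw hz hlast.le
  rw [diagIntegrand, norm_mul, norm_div, norm_inv, norm_pow, norm_mul, norm_prod_eq_norm_last hz,
    mul_comm ‖z (Fin.last d)‖ ‖t‖, inv_pow]
  gcongr
  · exact (norm_nonneg _).trans hG
  · exact le_norm_HC hw hz hlast.le hc htc.le ht.le

end UnitTorus

theorem norm_zOf_castSucc (ε : ℝ) (θ : Fin (d + 1) → ℝ) (j : Fin d) :
    ‖zOf d ε θ (Fin.castSucc j)‖ = 1 := by
  simp [zOf, (Fin.castSucc_lt_last j).ne, Complex.norm_exp_I_mul_ofReal]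

theorem norm_zOf_last (ε : ℝ) (θ : Fin (d + 1) → ℝ) : ‖zOf d ε θ (Fin.last d)‖ = |1 - ε| := by
  have h : (1 - ε : ℂ) = ((1 - ε : ℝ) : ℂ) := by push_cast; rfl
  simp [zOf, Complex.norm_exp_I_mul_ofReal, h, -Complex.ofReal_sub]

theorem zOf_zero_argOf (m : Fin (d + 1) → Fin 4) : zOf d 0 (argOf d m) = wOf d m := by
  funext j
  have h : Complex.I * (argOf d m j : ℂ) = (m j : ℕ) * (π / 2 * Complex.I) := by
    simp only [argOf]
    push_cast
    ring
  simp [zOf, wOf, h, Complex.exp_nat_mul, Complex.exp_pi_div_two_mul_I]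

theorem norm_wOf (m : Fin (d + 1) → Fin 4) (j : Fin (d + 1)) : ‖wOf d m j‖ = 1 := by
  simp [wOf]

theorem continuousAt_zOf (m : Fin (d + 1) → Fin 4) (j : Fin (d + 1)) :
    ContinuousAt (fun x : ℝ × (Fin (d + 1) → ℝ) => zOf d x.1 x.2 j) (0, argOf d m) := by
  unfold zOf
  split_ifs <;> fun_prop

theorem continuousAt_SbarC_zOf (m : Fin (d + 1) → Fin 4) :
    ContinuousAt (fun x : ℝ × (Fin (d + 1) → ℝ) => SbarC d S w (zOf d x.1 x.2))
      (0, argOf d m) := by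
  have hzpow (j : Fin (d + 1)) (k : ℤ) :
      ContinuousAt (fun x : ℝ × (Fin (d + 1) → ℝ) => zOf d x.1 x.2 j ^ k) (0, argOf d m) := by
    refine (continuousAt_zOf m j).zpow₀ k (Or.inl ?_)
    rw [zOf_zero_argOf, ← norm_ne_zero_iff, norm_wOf]
    exact one_ne_zero
  exact tendsto_finsetSum _ fun i _ =>
    (continuousAt_const.mul (tendsto_finsetProd _ fun j _ => hzpow _ _)).mul (hzpow _ _)

theorem SbarC_wOf_eq_conj {m : Fin (d + 1) → Fin 4}
    (hm : ∀ j : Fin d, m (Fin.castSucc j) = 0 ∨ m (Fin.castSucc j) = 2) :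
    SbarC d S w (wOf d m) = starRingEnd ℂ (SC d S w (wOf d m)) := by
  have hreal (j : Fin d) :
      starRingEnd ℂ (wOf d m (Fin.castSucc j)) = wOf d m (Fin.castSucc j) := by
    rcases hm j with h | h <;> simp [wOf, h]
  have hlast : starRingEnd ℂ (wOf d m (Fin.last d)) = (wOf d m (Fin.last d))⁻¹ :=
    (Complex.inv_eq_conj (norm_wOf m _)).symm
  simp only [SbarC, SC, map_sum, map_mul, map_prod, map_zpow₀, Complex.conj_ofReal,
    Fin.prod_univ_castSucc, hreal, hlast, inv_zpow', mul_assoc]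

theorem norm_SbarC_wOf {m : Fin (d + 1) → Fin 4} (hm : m ∈ GammaIdx d S w) :
    ‖SbarC d S w (wOf d m)‖ = S1 d S w := by
  obtain ⟨haxis, hnorm⟩ := (Finset.mem_filter.1 hm).2
  rw [SbarC_wOf_eq_conj haxis, RCLike.norm_conj]
  simpa [norm_prod, norm_wOf] using hnorm

theorem box_eq_ball (m : Fin (d + 1) → Fin 4) (δ : ℝ) :
    box d m δ = Metric.ball (argOf d m) δ := by
  simp only [box, ball_pi', Real.ball_eq_Ioo]

theorem eventually_lt_norm_last_mul_norm_SbarC {c : ℝ} (hc : c < S1 d S w) :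
    ∀ᶠ p : ℝ × ℝ in 𝓝 0 ×ˢ 𝓝 0, ∀ θ ∈ Nparam d S w p.2,
      c < ‖zOf d p.1 θ (Fin.last d)‖ * ‖SbarC d S w (zOf d p.1 θ)‖ := by
  have hbox : ∀ m ∈ GammaIdx d S w, ∀ᶠ p : ℝ × ℝ in 𝓝 0 ×ˢ 𝓝 0, ∀ θ ∈ box d m p.2,
      c < ‖zOf d p.1 θ (Fin.last d)‖ * ‖SbarC d S w (zOf d p.1 θ)‖ := by
    intro m hm
    have hcont : ContinuousAt (fun x : ℝ × (Fin (d + 1) → ℝ) =>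
        ‖zOf d x.1 x.2 (Fin.last d)‖ * ‖SbarC d S w (zOf d x.1 x.2)‖) (0, argOf d m) :=
      (continuousAt_zOf m (Fin.last d)).norm.mul (continuousAt_SbarC_zOf m).norm
    have hlim : c < ‖zOf d 0 (argOf d m) (Fin.last d)‖ * ‖SbarC d S w (zOf d 0 (argOf d m))‖ := by
      rwa [zOf_zero_argOf, norm_wOf, norm_SbarC_wOf hm, one_mul]
    simpa only [box_eq_ball] using
      eventually_forall_mem_ball (hcont.eventually_const_lt hlim)
  filter_upwards [(eventually_all_finset _).2 hbox] with p hp θ hθ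
  obtain ⟨m, hm, hθm⟩ := Set.mem_iUnion₂.1 hθ
  exact hp m hm θ hθm

theorem Nparam_mono {δ δ' : ℝ} (h : δ ≤ δ') : Nparam d S w δ ⊆ Nparam d S w δ' := by
  simp only [Nparam, box_eq_ball]
  exact Set.iUnion₂_mono fun m _ => Metric.ball_subset_ball h

theorem volume_Nparam_lt_top (δ : ℝ) : volume (Nparam d S w δ) < ⊤ := by
  refine measure_biUnion_lt_top (Finset.finite_toSet _) fun m _ => ?_
  rw [box_eq_ball]
  exact measure_ball_lt_top

theorem norm_fullIntegral_le {n : ℕ} {ε δ r M : ℝ}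
    (h : ∀ θ ∈ Nparam d S w δ, ∀ φ : ℝ,
      ‖diagIntegrand d S w n (zOf d ε θ) (r * Complex.exp (Complex.I * φ))‖ ≤ M) :
    ‖fullIntegral d S w n ε δ r‖ ≤
      ((2 * π) ^ (d + 2))⁻¹ * (M * (2 * π) * volume.real (Nparam d S w δ)) := by
  have hcircle : volume.real (Set.Ioo 0 (2 * π)) = 2 * π := by
    rw [Real.volume_real_Ioo_of_le (by positivity), sub_zero]
  have hinner (θ) (hθ : θ ∈ Nparam d S w δ) := norm_setIntegral_le_of_norm_le_const
    (μ := volume) (s := Set.Ioo 0 (2 * π)) measure_Ioo_lt_top fun φ _ => h θ hθ φ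
  rw [hcircle] at hinner
  rw [fullIntegral, norm_smul, norm_inv, Real.norm_of_nonneg (by positivity)]
  gcongr
  exact norm_setIntegral_le_of_norm_le_const (volume_Nparam_lt_top δ) hinner

theorem exists_eventually_norm_diagIntegrand_le (hw : ∀ i ∈ S, 0 ≤ w i) {r τ : ℝ} (hr : 0 < r)
    (hrS : r⁻¹ < S1 d S w) (hrQA : r * (sliceWeight S w 0 + sliceWeight S w (-1)) < 1)
    (hτ : r⁻¹ < τ) :
    ∃ K, ∀ᶠ p : ℝ × ℝ in 𝓝[>] 0 ×ˢ 𝓝 0, ∀ n : ℕ, ∀ θ ∈ Nparam d S w p.2, ∀ φ : ℝ,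
      ‖diagIntegrand d S w n (zOf d p.1 θ) (r * Complex.exp (Complex.I * φ))‖ ≤
        K * p.1⁻¹ * τ ^ n := by
  obtain ⟨c, hrc, hcS⟩ := exists_between hrS
  have htc : 1 < r * c := (inv_lt_iff_one_lt_mul₀' hr).1 hrc
  have hQA : 0 ≤ sliceWeight S w 0 + 2 * sliceWeight S w (-1) := by
    linarith [sliceWeight_nonneg hw 0, sliceWeight_nonneg hw (-1)]
  have hrate : ∀ᶠ ε in 𝓝 (0 : ℝ), (r * (1 - ε))⁻¹ < τ := by
    have hcont : ContinuousAt (fun ε : ℝ => (r * (1 - ε))⁻¹) 0 :=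
      ContinuousAt.inv₀ (by fun_prop) (by simpa using hr.ne')
    exact hcont.eventually_lt_const (by simpa using hτ)
  refine ⟨2 ^ d * (1 + r * (sliceWeight S w 0 + 2 * sliceWeight S w (-1))) /
    ((r * c - 1) * (1 - r * (sliceWeight S w 0 + sliceWeight S w (-1)))), ?_⟩
  have hε : ∀ᶠ ε in 𝓝[>] (0 : ℝ), ε ∈ Set.Ioo 0 1 ∧ (r * (1 - ε))⁻¹ < τ :=
    Eventually.and (Ioo_mem_nhdsGT one_pos) (hrate.filter_mono nhdsWithin_le_nhds)
  filter_upwards [hε.prod_inl _, (eventually_lt_norm_last_mul_norm_SbarC hcS).filter_mono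
    (prod_mono_left _ nhdsWithin_le_nhds)] with p ⟨⟨hε₀, hε₁⟩, hετ⟩ hS n θ hθ φ
  have hlast : ‖zOf d p.1 θ (Fin.last d)‖ = 1 - p.1 := by
    rw [norm_zOf_last, abs_of_pos (sub_pos.2 hε₁)]
  have ht : ‖r * Complex.exp (Complex.I * φ)‖ = r := by
    simp [Complex.norm_exp_I_mul_ofReal, abs_of_pos hr]
  have hbound := norm_diagIntegrand_le hw (norm_zOf_castSucc p.1 θ) (by rw [hlast]; linarith)
    (hS θ hθ).le (by rwa [ht]) (by rwa [ht]) n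
  rw [ht, hlast, sub_sub_cancel] at hbound
  have : 0 < 1 - p.1 := sub_pos.2 hε₁
  have hrc_sub : 0 < r * c - 1 := sub_pos.2 htc
  have hrQA_sub := sub_pos.2 hrQA
  calc _ ≤ _ := hbound
    _ ≤ 2 ^ d * (1 + r * (sliceWeight S w 0 + 2 * sliceWeight S w (-1))) /
          (p.1 * (r * c - 1) * (1 - r * (sliceWeight S w 0 + sliceWeight S w (-1)))) * τ ^ n := by
      gcongr
    _ = _ := by field_simp

theorem exists_eventually_norm_fullIntegral_le (hw : ∀ i ∈ S, 0 ≤ w i) {r τ : ℝ} (hr : 0 < r)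
    (hrS : r⁻¹ < S1 d S w) (hrQA : r * (sliceWeight S w 0 + sliceWeight S w (-1)) < 1)
    (hτ : r⁻¹ < τ) :
    ∃ C, ∀ᶠ p : ℝ × ℝ in 𝓝[>] 0 ×ˢ 𝓝 0, ∀ n : ℕ,
      ‖fullIntegral d S w n p.1 p.2 r‖ ≤ C * (p.1⁻¹ * τ ^ n) := by
  obtain ⟨K, hK⟩ := exists_eventually_norm_diagIntegrand_le hw hr hrS hrQA hτ
  refine ⟨((2 * π) ^ (d + 2))⁻¹ * (|K| * (2 * π) * volume.real (Nparam d S w 1)), ?_⟩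
  have hε : ∀ᶠ ε in 𝓝[>] (0 : ℝ), 0 < ε := self_mem_nhdsWithin
  have hδ : ∀ᶠ δ in 𝓝 (0 : ℝ), δ ≤ 1 := (eventually_lt_nhds one_pos).mono fun _ => le_of_lt
  have hτ₀ : 0 < τ := (inv_pos.2 hr).trans hτ
  filter_upwards [hK, hε.prod_mk hδ] with p hp ⟨hε₀, hδ₁⟩ n
  have hvol : volume.real (Nparam d S w p.2) ≤ volume.real (Nparam d S w 1) :=
    measureReal_mono (Nparam_mono hδ₁) (volume_Nparam_lt_top 1).ne
  calc ‖fullIntegral d S w n p.1 p.2 r‖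
      ≤ ((2 * π) ^ (d + 2))⁻¹ *
          (K * p.1⁻¹ * τ ^ n * (2 * π) * volume.real (Nparam d S w p.2)) :=
        norm_fullIntegral_le (hp n)
    _ ≤ ((2 * π) ^ (d + 2))⁻¹ *
          (|K| * p.1⁻¹ * τ ^ n * (2 * π) * volume.real (Nparam d S w 1)) := by
        gcongr
        exact le_abs_self K
    _ = _ := by ring

theorem isBigO_fullIntegral (hw : ∀ i ∈ S, 0 ≤ w i) {r τ : ℝ} (hr : 0 < r)
    (hrS : r⁻¹ < S1 d S w) (hrQA : r * (sliceWeight S w 0 + sliceWeight S w (-1)) < 1)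
    (hτ : r⁻¹ < τ) {ε δ : ℕ → ℝ} (hε : Tendsto ε atTop (𝓝[>] 0)) (hδ : Tendsto δ atTop (𝓝 0))
    (hε_inv : ∀ a : ℝ, 1 < a → (fun n => (ε n)⁻¹) =o[atTop] fun n => a ^ n) :
    (fun n : ℕ => fullIntegral d S w n (ε n) (δ n) r) =O[atTop] fun n => τ ^ n := by
  obtain ⟨σ, hrσ, hστ⟩ := exists_between hτ
  have hσ : 0 < σ := (inv_pos.2 hr).trans hrσ
  obtain ⟨C, hC⟩ := exists_eventually_norm_fullIntegral_le hw hr hrS hrQA hrσ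
  have hbound : (fun n : ℕ => fullIntegral d S w n (ε n) (δ n) r) =O[atTop]
      fun n => (ε n)⁻¹ * σ ^ n := by
    refine IsBigO.of_bound |C| ?_
    filter_upwards [(hε.prodMk hδ).eventually hC] with n hn
    refine (hn n).trans ((le_abs_self _).trans_eq ?_)
    rw [abs_mul, Real.norm_eq_abs]
  have hratio : (fun n : ℕ => (ε n)⁻¹ * σ ^ n) =O[atTop] fun n => (τ / σ) ^ n * σ ^ n :=
    (hε_inv _ ((one_lt_div hσ).2 hστ)).isBigO.mul (isBigO_refl _ _)
  refine (hbound.trans hratio).congr_right fun n => ?_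
  rw [← mul_pow, div_mul_cancel₀ _ hσ.ne']

theorem exists_pos_forall_outer_radius
    (hstep : ∀ i ∈ S, i (Fin.last d) = -1 ∨ i (Fin.last d) = 0 ∨ i (Fin.last d) = 1)
    (hw : ∀ i ∈ S, 0 < w i) (hfwd : ∃ i ∈ S, i (Fin.last d) = 1) :
    ∃ γ₀ > 0, ∀ γ, 0 < γ → γ < γ₀ →
      0 < (1 + γ) / S1 d S w ∧ ((1 + γ) / S1 d S w)⁻¹ < S1 d S w ∧
        (1 + γ) / S1 d S w * (sliceWeight S w 0 + sliceWeight S w (-1)) < 1 := by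
  have hw₀ i hi := (hw i hi).le
  have hQ := sliceWeight_nonneg hw₀ 0
  have hA := sliceWeight_nonneg hw₀ (-1)
  have hB := sliceWeight_pos hw hfwd
  have hsplit := S1_eq_add_sliceWeight (w := w) hstep
  have hS : 0 < S1 d S w := by linarith
  refine ⟨sliceWeight S w 1 / S1 d S w, div_pos hB hS, fun γ hγ hγB => ⟨by positivity, ?_, ?_⟩⟩
  · rw [inv_div]
    exact div_lt_self hS (by linarith)
  · have hγS : γ * S1 d S w < sliceWeight S w 1 := (lt_div_iff₀ hS).1 hγB
    rw [div_mul_eq_mul_div, div_lt_one hS]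
    nlinarith [mul_pos hγ hB]

end ZeroDrift

theorem outer_contour_general
    {d : ℕ} {S : Finset (Fin (d + 1) → ℤ)} {w : (Fin (d + 1) → ℤ) → ℝ}
    (hstep : ∀ i ∈ S, i (Fin.last d) = -1 ∨ i (Fin.last d) = 0 ∨ i (Fin.last d) = 1)
    (hw : ∀ i ∈ S, 0 < w i) (hfwd : ∃ i ∈ S, i (Fin.last d) = 1)
    {ε δ : ℕ → ℝ} (hε : Tendsto ε atTop (𝓝[>] 0)) (hδ : Tendsto δ atTop (𝓝 0))
    (hε_inv : ∀ a : ℝ, 1 < a → (fun n => (ε n)⁻¹) =o[atTop] fun n => a ^ n) :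
    ∃ γ₀ : ℝ, 0 < γ₀ ∧ ∀ γ : ℝ, 0 < γ → γ < γ₀ →
      ∃ τ C : ℝ, 0 < τ ∧ τ < ZeroDrift.S1 d S w ∧
        ∀ n : ℕ,
          ‖ZeroDrift.fullIntegral d S w n (ε n) (δ n) ((1 + γ) / ZeroDrift.S1 d S w)‖
            ≤ C * τ ^ n := by
  obtain ⟨γ₀, hγ₀, hradius⟩ := ZeroDrift.exists_pos_forall_outer_radius hstep hw hfwd
  refine ⟨γ₀, hγ₀, fun γ hγ hγγ₀ => ?_⟩
  obtain ⟨hr, hrS, hrQA⟩ := hradius γ hγ hγγ₀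
  obtain ⟨τ, hrτ, hτS⟩ := exists_between hrS
  have hτ : 0 < τ := (inv_pos.2 hr).trans hrτ
  obtain ⟨C, -, hC⟩ := bound_of_isBigO_nat_atTop <|
    ZeroDrift.isBigO_fullIntegral (fun i hi => (hw i hi).le) hr hrS hrQA hrτ hε hδ hε_inv
  refine ⟨τ, C, hτ, hτS, fun n => ?_⟩
  simpa [abs_of_pos hτ] using hC (pow_pos hτ n).ne'

/-- Lemma (outer contour): for sufficiently small `γ > 0`, the integral over the
outer circle `C^out = {|t| = (1+γ)/S(1)}` is exponentially smaller than `S(1)^n`. -/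
theorem outer_contour
    (d : ℕ) (S : Finset (Fin (d + 1) → ℤ)) (w : (Fin (d + 1) → ℤ) → ℝ)
    (hstep : ∀ i ∈ S, (∀ j, i j = -1 ∨ i j = 0 ∨ i j = 1) ∧ i ≠ 0)
    (hw : ∀ i ∈ S, 0 < w i)
    (hsym : ∀ k : Fin d, SymmetricAxis (d + 1) S w (Fin.castSucc k))
    (hfwd : ∀ k : Fin (d + 1), ∃ i ∈ S, i k = 1)
    (hbwd : ∀ k : Fin (d + 1), ∃ i ∈ S, i k = -1)
    (hzero : (∑ i ∈ S.filter fun i => i (Fin.last d) = -1, w i)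
        = ∑ i ∈ S.filter fun i => i (Fin.last d) = 1, w i)
    (α β : ℝ) (hα : 1 / 2 < α) (hαβ : α < 2 * β) (hsum : 1 < α + β)
    (hβ1 : 1 / 3 < β) (hβ2 : β < 1 / 2) :
    ∃ γ₀ : ℝ, 0 < γ₀ ∧ ∀ γ : ℝ, 0 < γ → γ < γ₀ →
      ∃ τ C : ℝ, 0 < τ ∧ τ < ZeroDrift.S1 d S w ∧
        ∀ n : ℕ,
          ‖ZeroDrift.fullIntegral d S w n ((n : ℝ) ^ (-α)) ((n : ℝ) ^ (-β))
              ((1 + γ) / ZeroDrift.S1 d S w)‖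
            ≤ C * τ ^ n := by
  have hε := tendsto_natCast_rpow_neg_nhdsGT_zero (by linarith : 0 < α)
  have hδ := tendsto_natCast_rpow_neg_nhdsGT_zero (by linarith : 0 < β)
  exact outer_contour_general (fun i hi => (hstep i hi).1 (Fin.last d)) hw (hfwd (Fin.last d)) hε
    (tendsto_nhds_of_tendsto_nhdsWithin hδ) fun _ => isLittleO_inv_natCast_rpow_neg_const_pow α

end
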